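/- arXiv:2202.06711 — 3 statements merged into one kernel-verified Lean document; each statement's English description precedes it below -/
import Mathlib

section
/- Let 𝓔 be an abelian category, n ≥ 1, M an n-cluster tilting subcategory of 𝓔, and Y : 0 → Y⁰ → Y¹ → ⋯ → Yⁿ → Y^{n+1} → 0 an n-exact sequence in M. For j ∈ {1,…,n−1} set C^j := Im(Y^j → Y^{j+1}) in 𝓔. Then for every X ∈ M and every k ∈ {1,…,n−1} with k ≠ n−j, one has Ext^k(X, C^j) = 0; equivalently, if Ext^k(X, C^j) ≠ 0 for some X ∈ M and k ∈ {1,…,n−1}, then k = n−j. -/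
open CategoryTheory CategoryTheory.Abelian CategoryTheory.Limits

universe w v u

namespace NZPaper

variable {C : Type u} [Category.{v} C] [Abelian C] [HasExt.{w} C]

/-- A full (iso-closed) subcategory, encoded as a set of objects, is `n`-cluster tilting if it
admits monic left approximations and epic right approximations and is characterized by the
vanishing of `Ext^i` for `1 ≤ i ≤ n-1` on either side. -/
def IsNClusterTilting (n : ℕ) (M : Set C) : Prop :=
  (∀ ⦃X Y : C⦄, (X ≅ Y) → X ∈ M → Y ∈ M) ∧
  (∀ E : C, ∃ (X : C) (f : E ⟶ X), X ∈ M ∧ Mono f ∧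
      ∀ X' ∈ M, ∀ g : E ⟶ X', ∃ h : X ⟶ X', f ≫ h = g) ∧
  (∀ E : C, ∃ (X : C) (f : X ⟶ E), X ∈ M ∧ Epi f ∧
      ∀ X' ∈ M, ∀ g : X' ⟶ E, ∃ h : X' ⟶ X, h ≫ f = g) ∧
  (∀ E : C, E ∈ M ↔ ∀ Y ∈ M, ∀ i : ℕ, 1 ≤ i → i < n → ∀ e : Ext E Y i, e = 0) ∧
  (∀ E : C, E ∈ M ↔ ∀ Y ∈ M, ∀ i : ℕ, 1 ≤ i → i < n → ∀ e : Ext Y E i, e = 0)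

/-- An `nℤ`-cluster tilting subcategory: in addition `Ext^k` vanishes on `M` for every
`k ≥ 1` not divisible by `n`. -/
def IsNZClusterTilting (n : ℕ) (M : Set C) : Prop :=
  IsNClusterTilting n M ∧
  ∀ X ∈ M, ∀ Y ∈ M, ∀ k : ℕ, 1 ≤ k → ¬ (n ∣ k) → ∀ e : Ext X Y k, e = 0

/-- An exact sequence `0 → Y 0 → Y 1 → ⋯ → Y m → Y (m+1) → 0` in an abelian category,
recorded together with its canonical splicing into short exact sequences
`0 → K i → Y (i+1) → K (i+1) → 0` (`K i` is the image of `d i` for `1 ≤ i ≤ m`,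
`K 0 = Y 0` and `K m = Y (m+1)`).  Only the indices `0, …, m+1` (resp. `0, …, m`) of
`Y` (resp. of the differentials and of `K`) are relevant; the remaining values are junk
(any such exact sequence can be padded by zero objects). -/
structure ExactExtension (C : Type u) [Category.{v} C] [Abelian C] (m : ℕ) where
  Y : ℕ → C
  d : ∀ i, Y i ⟶ Y (i + 1)
  K : ℕ → C
  ι : ∀ i, K i ⟶ Y (i + 1)
  π : ∀ i, Y i ⟶ K i
  hK0 : K 0 = Y 0
  hKm : K m = Y (m + 1)
  zero : ∀ i, ι i ≫ π (i + 1) = 0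
  shortExact : ∀ i, (ShortComplex.mk (ι i) (π (i + 1)) (zero i)).ShortExact
  d0_eq : eqToHom hK0 ≫ d 0 = ι 0
  dmid_eq : ∀ i, 1 ≤ i → i + 1 ≤ m → d i = π i ≫ ι i
  dlast_eq : d m = π m ≫ eqToHom hKm

/-- The Yoneda class of the chain of the first `j` short exact sequences,
obtained as the Yoneda composite of their `Ext¹`-classes. -/
noncomputable def ExactExtension.chainClass {m : ℕ} (T : ExactExtension C m) :
    ∀ j : ℕ, Ext (T.K j) (T.K 0) j
  | 0 => Ext.mk₀ (𝟙 _)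
  | (j + 1) => ((T.shortExact j).extClass).comp (T.chainClass j) (by omega)

/-- The Yoneda class `[ξ] ∈ Ext^m (Y (m+1)) (Y 0)` of the exact sequence
`0 → Y 0 → ⋯ → Y (m+1) → 0`, i.e. the Yoneda composite of the `Ext¹`-classes of the
short exact sequences obtained by splicing it at its images. -/
noncomputable def ExactExtension.extClass {m : ℕ} (T : ExactExtension C m) :
    Ext (T.Y (m + 1)) (T.Y 0) m :=
  (Ext.mk₀ (eqToHom T.hKm.symm)).comp
    ((T.chainClass m).comp (Ext.mk₀ (eqToHom T.hK0)) (add_zero m)) (zero_add m)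

/-- Transport of an `Ext`-class along equalities of objects. -/
noncomputable def extTransport {X X' Z Z' : C} {a : ℕ} (e : Ext X Z a)
    (hX : X = X') (hZ : Z = Z') : Ext X' Z' a :=
  (Ext.mk₀ (eqToHom hX.symm)).comp (e.comp (Ext.mk₀ (eqToHom hZ)) (add_zero a)) (zero_add a)

/-- Exactness, at every spot, of the long sequence of abelian groups
`0 → Hom(X,Y⁰) → ⋯ → Hom(X,Y^{n+1}) → Extⁿ(X,Y⁰) → ⋯ → Extⁿ(X,Y^{n+1}) → Ext^{2n}(X,Y⁰) → ⋯`
(`Ext⁰ = Hom`), where within each row the maps are induced by the differentials of `T` and each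
connecting map `Ext^{kn}(X,Y^{n+1}) → Ext^{(k+1)n}(X,Y⁰)` is Yoneda composition with the class
`[T] ∈ Extⁿ(Y^{n+1},Y⁰)`. -/
def CovLES (n : ℕ) (X : C) (T : ExactExtension C n) : Prop :=
  (Function.Injective fun e : Ext X (T.Y 0) 0 => e.comp (Ext.mk₀ (T.d 0)) (add_zero 0)) ∧
  (∀ k i : ℕ, i < n → Function.Exact
      (fun e : Ext X (T.Y i) (k * n) => e.comp (Ext.mk₀ (T.d i)) (add_zero _))
      (fun e : Ext X (T.Y (i + 1)) (k * n) => e.comp (Ext.mk₀ (T.d (i + 1))) (add_zero _))) ∧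
  (∀ k : ℕ, Function.Exact
      (fun e : Ext X (T.Y n) (k * n) => e.comp (Ext.mk₀ (T.d n)) (add_zero _))
      (fun e : Ext X (T.Y (n + 1)) (k * n) =>
        e.comp T.extClass (show k * n + n = (k + 1) * n by ring))) ∧
  (∀ k : ℕ, Function.Exact
      (fun e : Ext X (T.Y (n + 1)) (k * n) =>
        e.comp T.extClass (show k * n + n = (k + 1) * n by ring))
      (fun e : Ext X (T.Y 0) ((k + 1) * n) => e.comp (Ext.mk₀ (T.d 0)) (add_zero _)))

/-- Exactness, at every spot, of the long sequence of abelian groups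
`0 → Hom(Y^{n+1},Z) → ⋯ → Hom(Y⁰,Z) → Extⁿ(Y^{n+1},Z) → ⋯ → Extⁿ(Y⁰,Z) → Ext^{2n}(Y^{n+1},Z) → ⋯`
(`Ext⁰ = Hom`), where within each row the maps are induced by the differentials of `T` and each
connecting map `Ext^{kn}(Y⁰,Z) → Ext^{(k+1)n}(Y^{n+1},Z)` is Yoneda precomposition with the class
`[T] ∈ Extⁿ(Y^{n+1},Y⁰)`. -/
def ContraLES (n : ℕ) (Z : C) (T : ExactExtension C n) : Prop :=
  (Function.Injective fun e : Ext (T.Y (n + 1)) Z 0 => (Ext.mk₀ (T.d n)).comp e (zero_add 0)) ∧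
  (∀ k i : ℕ, i < n → Function.Exact
      (fun e : Ext (T.Y (i + 2)) Z (k * n) => (Ext.mk₀ (T.d (i + 1))).comp e (zero_add _))
      (fun e : Ext (T.Y (i + 1)) Z (k * n) => (Ext.mk₀ (T.d i)).comp e (zero_add _))) ∧
  (∀ k : ℕ, Function.Exact
      (fun e : Ext (T.Y 1) Z (k * n) => (Ext.mk₀ (T.d 0)).comp e (zero_add _))
      (fun e : Ext (T.Y 0) Z (k * n) =>
        T.extClass.comp e (show n + k * n = (k + 1) * n by ring))) ∧
  (∀ k : ℕ, Function.Exact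
      (fun e : Ext (T.Y 0) Z (k * n) =>
        T.extClass.comp e (show n + k * n = (k + 1) * n by ring))
      (fun e : Ext (T.Y (n + 1)) Z ((k + 1) * n) => (Ext.mk₀ (T.d n)).comp e (zero_add _)))

end NZPaper

namespace NZPaper

/-!
Dimension shift along the short exact sequences `0 → K i → Y (i+1) → K (i+1) → 0`. Shifting
towards `Y 0` raises the degree of `Ext`, and `Extᵏ(X, K j)` vanishes as soon as every
`Ext^{k+j-i}(X, Y i)` with `i ≤ j` does; this settles `k + j < n`. Shifting towards `Y (n+1)` lowers
the degree, and it vanishes as soon as every `Ext^{k+j+1-i}(X, Y i)` with `j < i ≤ n + 1` does; this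
settles `n < k + j`. In the remaining degree `k = n - j` either shift ends outside the degrees
`1, …, n-1` where `Ext(X, Y i)` is known to vanish.
-/

section

variable {C : Type u} [Category.{v} C] [Abelian C] [HasExt.{w} C]

section ShortExact

variable {S : ShortComplex C} (hS : S.ShortExact) {X : C} {k : ℕ}

include hS

theorem subsingleton_ext_X₃ (h₂ : Subsingleton (Ext X S.X₂ k))
    (h₁ : Subsingleton (Ext X S.X₁ (k + 1))) : Subsingleton (Ext X S.X₃ k) := by
  refine subsingleton_of_forall_eq 0 fun e ↦ ?_
  obtain ⟨e₂, rfl⟩ := Ext.covariant_sequence_exact₃ X hS e rfl (Subsingleton.elim _ 0)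
  rw [Subsingleton.elim e₂ 0, Ext.zero_comp]

theorem subsingleton_ext_X₁ (h₂ : Subsingleton (Ext X S.X₂ (k + 1)))
    (h₃ : Subsingleton (Ext X S.X₃ k)) : Subsingleton (Ext X S.X₁ (k + 1)) := by
  refine subsingleton_of_forall_eq 0 fun e ↦ ?_
  obtain ⟨e₃, rfl⟩ := Ext.covariant_sequence_exact₁ X hS e (Subsingleton.elim _ 0) rfl
  rw [Subsingleton.elim e₃ 0, Ext.zero_comp]

end ShortExact

namespace ExactExtension

variable {m : ℕ} (T : ExactExtension C m) {X : C} {j k : ℕ}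

theorem subsingleton_ext_K_of_le
    (hY : ∀ i l, i ≤ j → l + i = k + j → Subsingleton (Ext X (T.Y i) l)) :
    Subsingleton (Ext X (T.K j) k) := by
  induction j generalizing k with
  | zero => exact T.hK0 ▸ hY 0 k le_rfl rfl
  | succ j ih =>
    exact subsingleton_ext_X₃ (T.shortExact j) (hY (j + 1) k le_rfl rfl)
      (ih fun i l hi hl ↦ hY i l (by omega) (by omega))

theorem subsingleton_ext_K_of_lt (hj : j ≤ m) (hmk : m ≤ k + j)
    (hY : ∀ i l, j < i → i ≤ m + 1 → l + i = k + j + 1 → Subsingleton (Ext X (T.Y i) l)) :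
    Subsingleton (Ext X (T.K j) k) := by
  induction hj using Nat.decreasingInduction generalizing k with
  | self => exact T.hKm ▸ hY (m + 1) k (by omega) le_rfl rfl
  | of_succ j hj ih =>
    obtain ⟨k, rfl⟩ : ∃ l, k = l + 1 := Nat.exists_eq_add_one.mpr (by omega)
    exact subsingleton_ext_X₁ (T.shortExact j) (hY (j + 1) (k + 1) (by omega) (by omega) (by omega))
      (ih (by omega) fun i l hji him hl ↦ hY i l (by omega) him (by omega))

end ExactExtension

theorem IsNClusterTilting.subsingleton_ext {n : ℕ} {M : Set C} (hM : IsNClusterTilting n M)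
    {X Y : C} (hX : X ∈ M) (hY : Y ∈ M) {k : ℕ} (hk : 1 ≤ k) (hkn : k < n) :
    Subsingleton (Ext X Y k) :=
  subsingleton_of_forall_eq 0 ((hM.2.2.2.2 Y).mp hY X hX k hk hkn)

theorem ext_image_vanishes_low_degrees_general {n : ℕ} (T : ExactExtension C n) {X : C}
    (hXY : ∀ i ≤ n + 1, ∀ l, 1 ≤ l → l < n → Subsingleton (Ext X (T.Y i) l))
    {j k : ℕ} (hj : j ≤ n) (hk : 1 ≤ k) (hkn : k < n) (hkj : k + j ≠ n) :
    Subsingleton (Ext X (T.K j) k) := by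
  rcases hkj.lt_or_gt with hlt | hgt
  · exact T.subsingleton_ext_K_of_le fun i l hi hl ↦
      hXY i (by omega) l (by omega) (by omega)
  · exact T.subsingleton_ext_K_of_lt hj hgt.le fun i l hji hi hl ↦
      hXY i hi l (by omega) (by omega)

end

/-- Let `𝓔` be an abelian category, `n ≥ 1`, `M` an `n`-cluster tilting
subcategory of `𝓔`, and `Y` an `n`-exact sequence in `M`.  For `j ∈ {1,…,n-1}` let
`C^j = Im(Y^j → Y^{j+1})` (realized as the splice object `T.K j`).  Then for every `X ∈ M` and
every `k ∈ {1,…,n-1}` with `k ≠ n - j` one has `Ext^k(X, C^j) = 0`. -/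
theorem ext_image_vanishes_low_degrees
    {C : Type u} [Category.{v} C] [Abelian C] [HasExt.{w} C]
    (n : ℕ) (hn : 1 ≤ n) (M : Set C) (hM : IsNClusterTilting n M)
    (T : ExactExtension C n) (hT : ∀ i ≤ n + 1, T.Y i ∈ M)
    (j : ℕ) (hj1 : 1 ≤ j) (hj2 : j ≤ n - 1)
    (X : C) (hX : X ∈ M)
    (k : ℕ) (hk1 : 1 ≤ k) (hk2 : k ≤ n - 1) (hkj : k + j ≠ n) :
    ∀ e : Ext X (T.K j) k, e = 0 := by
  have : Subsingleton (Ext X (T.K j) k) := ext_image_vanishes_low_degrees_general T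
    (fun i hi _ ↦ hM.subsingleton_ext hX (hT i hi)) (by omega) hk1 (by omega) hkj
  exact fun e ↦ Subsingleton.elim e 0

end NZPaper
end

section
/- Let 𝓔 be an abelian category, n ≥ 1, M an n-cluster tilting subcategory of 𝓔 such that additionally Ext^i(X,Y) = 0 for all X, Y ∈ M and all i ∈ {n+1,…,2n−1}, and let Y : 0 → Y⁰ → Y¹ → ⋯ → Yⁿ → Y^{n+1} → 0 be an n-exact sequence in M. For j ∈ {1,…,n−1} set C^j := Im(Y^j → Y^{j+1}) in 𝓔. Then for every X ∈ M and every k ∈ {n+1,…,2n−1} with k ≠ 2n−j, one has Ext^k(X, C^j) = 0; equivalently, if Ext^k(X, C^j) ≠ 0 for some X ∈ M and k ∈ {n+1,…,2n−1}, then k = 2n−j. -/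
open CategoryTheory CategoryTheory.Abelian CategoryTheory.Limits

universe w v u

namespace NZPaper

/-!
Splicing `0 → Y 0 → ⋯ → Y (m+1) → 0` into the short exact sequences
`0 → K j → Y (j+1) → K (j+1) → 0`, the long exact `Ext(X, -)`-sequences shift dimensions along an
antidiagonal. If all `Ext^i(X, Y l)` with `a ≤ i ≤ b` vanish, then `Ext^k(X, K j)` embeds in
`Ext^{k+1}(X, K (j-1))`, and so on up to `Ext^{k+j}(X, Y 0)`, which is zero as long as
`k + j ≤ b`; in the other direction it is a quotient of `Ext^{k-1}(X, K (j+1))`, and so on down to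
`Ext^{k-(m-j)}(X, Y (m+1))`, which is zero as long as `a ≤ k - (m - j)`. For `m = n`, `a = n + 1`
and `b = 2n - 1`, the only antidiagonal missed by both shifts is `k + j = 2n`.
-/

section DimensionShifting

variable {C : Type u} [Category.{v} C] [Abelian C] [HasExt.{w} C] {X : C}

theorem ext_X₃_eq_zero {S : ShortComplex C} (hS : S.ShortExact) {k : ℕ}
    (h₂ : ∀ e : Ext X S.X₂ k, e = 0) (h₁ : ∀ e : Ext X S.X₁ (k + 1), e = 0) :
    ∀ e : Ext X S.X₃ k, e = 0 := by
  intro e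
  obtain ⟨x, rfl⟩ := Ext.covariant_sequence_exact₃ X hS e rfl (h₁ _)
  rw [h₂ x, Ext.zero_comp]

theorem ext_X₁_eq_zero {S : ShortComplex C} (hS : S.ShortExact) {k : ℕ}
    (h₂ : ∀ e : Ext X S.X₂ k, e = 0) (h₃ : ∀ i, i + 1 = k → ∀ e : Ext X S.X₃ i, e = 0) :
    ∀ e : Ext X S.X₁ k, e = 0 := by
  intro e
  cases k with
  | zero =>
    have := hS.mono_f
    exact Ext.postcomp_mk₀_injective_of_mono X S.f ((h₂ _).trans (h₂ _).symm)
  | succ i =>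
    obtain ⟨x, rfl⟩ := Ext.covariant_sequence_exact₁ X hS e (h₂ _) rfl
    rw [h₃ i rfl x, Ext.zero_comp]

namespace ExactExtension

variable {m : ℕ} (T : ExactExtension C m)

theorem ext_K_eq_zero_of_forall_le {j k : ℕ}
    (h : ∀ i l, l ≤ j → i + l = k + j → ∀ e : Ext X (T.Y l) i, e = 0) :
    ∀ e : Ext X (T.K j) k, e = 0 := by
  induction j generalizing k with
  | zero =>
    rw [T.hK0]
    exact h k 0 le_rfl rfl
  | succ j ih =>
    exact ext_X₃_eq_zero (T.shortExact j) (h k (j + 1) le_rfl rfl)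
      (ih fun i l hl hil => h i l (by omega) (by omega))

theorem ext_K_eq_zero_of_forall_lt {j k : ℕ} (hj : j ≤ m)
    (h : ∀ i l, j < l → l ≤ m + 1 → i + l = k + j + 1 → ∀ e : Ext X (T.Y l) i, e = 0) :
    ∀ e : Ext X (T.K j) k, e = 0 := by
  induction hj using Nat.decreasingInduction generalizing k with
  | self =>
    rw [T.hKm]
    exact h k (m + 1) m.lt_succ_self le_rfl rfl
  | of_succ j hj ih =>
    refine ext_X₁_eq_zero (T.shortExact j)
      (h k (j + 1) j.lt_succ_self (by omega) rfl) ?_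
    rintro k rfl
    exact ih fun i l hjl hlm hil => h i l (by omega) hlm (by omega)

end ExactExtension

theorem ext_image_vanishes_mid_degrees_general {m : ℕ} (T : ExactExtension C m) {a b : ℕ}
    (hvan : ∀ l ≤ m + 1, ∀ i, a ≤ i → i ≤ b → ∀ e : Ext X (T.Y l) i, e = 0)
    {j k : ℕ} (hj : j ≤ m) (hjk : a ≤ k ∧ k + j ≤ b ∨ a + m ≤ k + j ∧ k ≤ b) :
    ∀ e : Ext X (T.K j) k, e = 0 := by
  rcases hjk with ⟨hak, hkb⟩ | ⟨hak, hkb⟩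
  · exact T.ext_K_eq_zero_of_forall_le fun i l hlj hil =>
      hvan l (by omega) i (by omega) (by omega)
  · exact T.ext_K_eq_zero_of_forall_lt hj fun i l hjl hlm hil =>
      hvan l hlm i (by omega) (by omega)

end DimensionShifting

/-- Let `𝓔` be an abelian category, `n ≥ 1`, `M` an `n`-cluster tilting
subcategory of `𝓔` such that moreover `Ext^i(X,Y) = 0` for all `X, Y ∈ M` and all
`i ∈ {n+1,…,2n-1}`, and let `Y` be an `n`-exact sequence in `M`.  For `j ∈ {1,…,n-1}` let
`C^j = Im(Y^j → Y^{j+1})` (realized as the splice object `T.K j`).  Then for every `X ∈ M` and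
every `k ∈ {n+1,…,2n-1}` with `k ≠ 2n - j` one has `Ext^k(X, C^j) = 0`. -/
theorem ext_image_vanishes_mid_degrees
    {C : Type u} [Category.{v} C] [Abelian C] [HasExt.{w} C]
    (n : ℕ) (hn : 1 ≤ n) (M : Set C) (hM : IsNClusterTilting n M)
    (hvan : ∀ X ∈ M, ∀ Y ∈ M, ∀ i : ℕ, n + 1 ≤ i → i ≤ 2 * n - 1 → ∀ e : Ext X Y i, e = 0)
    (T : ExactExtension C n) (hT : ∀ i ≤ n + 1, T.Y i ∈ M)
    (j : ℕ) (hj1 : 1 ≤ j) (hj2 : j ≤ n - 1)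
    (X : C) (hX : X ∈ M)
    (k : ℕ) (hk1 : n + 1 ≤ k) (hk2 : k ≤ 2 * n - 1) (hkj : k + j ≠ 2 * n) :
    ∀ e : Ext X (T.K j) k, e = 0 :=
  ext_image_vanishes_mid_degrees_general T
    (fun l hl => hvan X hX _ (hT l hl)) (by omega) (by omega)

end NZPaper
end

section
/- Let 𝓔 be an abelian category, n ≥ 1, and M a full subcategory of 𝓔 closed under isomorphisms which is n-rigid, i.e., Ext^i(X,Y) = 0 for all X,Y ∈ M and 1 ≤ i ≤ n−1. Fix k ≥ 1 and i ∈ {1,…,n−1}, and suppose that Ext^j(X,Y) = 0 for all X,Y ∈ M and every j ∈ {1,…,kn+i−1} not divisible by n. Then for every X ∈ M and every complex Y⁰ → Y¹ → ⋯ → Yⁿ → Y^{n+1} in M such that 0 → Y⁰ → ⋯ → Y^{n+1} → 0 is exact in 𝓔, the induced sequence of abelian groups 0 → Hom(X,Y⁰) → ⋯ → Hom(X,Y^{n+1}) → Extⁿ(X,Y⁰) → ⋯ → Extⁿ(X,Y^{n+1}) → ⋯ → Ext^{kn}(X,Y⁰) → ⋯ → Ext^{kn}(X,Y^{i−1}) →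 Ext^{kn}(X,Y^{i}) is exact at every interior spot, where within each row the maps are induced by the differentials and each connecting map Ext^{mn}(X,Y^{n+1}) → Ext^{(m+1)n}(X,Y⁰) is Yoneda composition with the class [Y] ∈ Extⁿ(Y^{n+1},Y⁰) of the exact sequence 0 → Y⁰ → ⋯ → Y^{n+1} → 0. -/
open CategoryTheory CategoryTheory.Abelian CategoryTheory.Limits

universe w v u

namespace NZPaper

/-!
Let `K t` be the images of the exact sequence `Y`. Dimension shifting along the short exact
sequences `0 → K t → Y (t+1) → K (t+1) → 0` shows that `Ext^a(X, K t)` vanishes as soon as the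
groups `Ext^c(X, Y s)` do for `s ≤ t` and `c + s = a + t`, or, when `n ≤ a + t`, for `s > t` and
`c + s = a + t + 1`. By these vanishing results `Ext(X, Y t) → Ext(X, K t)` is surjective and
`Ext(X, K t) → Ext(X, Y (t+1))` injective where this is needed for exactness inside a row. The map
given by `[Y]` is the composite of the connecting maps of the short exact sequences; all but the
first are injective and all but the last are surjective where this is needed, so that the kernel of
the composite is that of the first one and its image is that of the last one. In the range
considered, the groups `Ext^c(X, Y s)` that have to vanish have `c` strictly between two consecutive
multiples of `n`.
-/

theorem injective_of_exact_of_subsingleton {A B D : Type*} [AddGroup A] [AddGroup B] [AddGroup D]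
    {f : A →+ B} {g : B →+ D} (h : Function.Exact f g) [Subsingleton A] :
    Function.Injective g := by
  refine (injective_iff_map_eq_zero g).2 fun x hx => ?_
  obtain ⟨y, rfl⟩ := (h x).1 hx
  rw [Subsingleton.elim y 0, map_zero]

theorem surjective_of_exact_of_subsingleton {A B D : Type*} [Zero D] {f : A → B} {g : B → D}
    (h : Function.Exact f g) [Subsingleton D] : Function.Surjective f :=
  fun y => (h y).1 (Subsingleton.elim _ _)

theorem subsingleton_of_exact {A B D : Type*} [AddGroup A] [AddGroup B] [AddGroup D]
    {f : A →+ B} {g : B →+ D} (h : Function.Exact f g) [Subsingleton A] [Subsingleton D] :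
    Subsingleton B :=
  (injective_of_exact_of_subsingleton h).subsingleton

theorem exact_comp_iff_of_surjective {A A' B D : Type*} [Zero D] {p : A' → A} {f : A → B}
    {g : B → D} (hp : Function.Surjective p) :
    Function.Exact (f ∘ p) g ↔ Function.Exact f g := by
  simp only [Function.Exact, hp.range_comp]

section Postcomp

variable {C : Type u} [Category.{v} C] [Abelian C] [HasExt.{w} C]

theorem postcomp_comp {Y Z W : C} {p q r : ℕ} (α : Ext Y Z p) (β : Ext Z W q) (hr : p + q = r)
    (X : C) {a b c : ℕ} (hb : a + p = b) (hc : b + q = c) :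
    (α.comp β hr).postcomp X (show a + r = c by omega) =
      (β.postcomp X hc).comp (α.postcomp X hb) := by
  ext e
  exact (Ext.comp_assoc e α β hb hr (by omega)).symm

theorem postcomp_mk₀_comp {Y Z W : C} (f : Y ⟶ Z) (g : Z ⟶ W) (X : C) (b : ℕ) :
    (Ext.mk₀ (f ≫ g)).postcomp X (add_zero b) =
      ((Ext.mk₀ g).postcomp X (add_zero b)).comp ((Ext.mk₀ f).postcomp X (add_zero b)) := by
  rw [← Ext.mk₀_comp_mk₀, postcomp_comp]

theorem postcomp_mk₀_bijective {Y Z : C} (f : Y ⟶ Z) [IsIso f] (X : C) (b : ℕ) :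
    Function.Bijective ((Ext.mk₀ f).postcomp X (add_zero b)) :=
  Function.bijective_iff_has_inverse.2 ⟨(Ext.mk₀ (inv f)).postcomp X (add_zero b),
    fun e => by simp, fun e => by simp⟩

end Postcomp

namespace ExactExtension

variable {C : Type u} [Category.{v} C] [Abelian C] {n : ℕ} (T : ExactExtension C n) {t : ℕ}

/-- The epimorphism of `Y t` onto the image `K t`, for `t ≤ n`. At `t = 0` it is the identification
`Y 0 = K 0`, as `T.π 0` is a junk value. -/
def toK : ∀ t, T.Y t ⟶ T.K t
  | 0 => eqToHom T.hK0.symm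
  | t + 1 => T.π (t + 1)

/-- The inclusion of the image `K t` into `Y (t + 1)`, for `t ≤ n`. At `t = n` it is the
identification `K n = Y (n + 1)`, as `T.ι n` is a junk value. -/
noncomputable def fromK (t : ℕ) : T.K t ⟶ T.Y (t + 1) :=
  if h : t = n then eqToHom (by rw [h, T.hKm]) else T.ι t

theorem d_zero_eq : T.d 0 = eqToHom T.hK0.symm ≫ T.ι 0 := by
  rw [← T.d0_eq, eqToHom_trans_assoc, eqToHom_refl, Category.id_comp]

theorem d_eq_toK_comp_ι (ht : t < n) : T.d t = T.toK t ≫ T.ι t := by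
  cases t with
  | zero => exact T.d_zero_eq
  | succ t => exact T.dmid_eq (t + 1) (by omega) ht

theorem d_succ_eq_π_comp_fromK (ht : t < n) : T.d (t + 1) = T.π (t + 1) ≫ T.fromK (t + 1) := by
  unfold fromK
  split_ifs with h
  · subst h
    exact T.dlast_eq
  · exact T.dmid_eq (t + 1) (by omega) (by omega)

theorem mono_d_zero : Mono (T.d 0) := by
  have : Mono (T.ι 0) := (T.shortExact 0).mono_f
  rw [d_zero_eq]
  infer_instance

variable [HasExt.{w} C] (X : C)

section LongExactSequence

variable (t) {a b : ℕ}

theorem exact_postcomp_ι_π :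
    Function.Exact ((Ext.mk₀ (T.ι t)).postcomp X (add_zero b))
      ((Ext.mk₀ (T.π (t + 1))).postcomp X (add_zero b)) :=
  (ShortComplex.ab_exact_iff_function_exact _).1
    (Ext.covariant_sequence_exact₂' X (T.shortExact t) b)

theorem exact_postcomp_π_extClass (hab : a + 1 = b) :
    Function.Exact ((Ext.mk₀ (T.π (t + 1))).postcomp X (add_zero a))
      ((T.shortExact t).extClass.postcomp X hab) :=
  (ShortComplex.ab_exact_iff_function_exact _).1
    (Ext.covariant_sequence_exact₃' X (T.shortExact t) a b hab)

theorem exact_postcomp_extClass_ι (hab : a + 1 = b) :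
    Function.Exact ((T.shortExact t).extClass.postcomp X hab)
      ((Ext.mk₀ (T.ι t)).postcomp X (add_zero b)) :=
  (ShortComplex.ab_exact_iff_function_exact _).1
    (Ext.covariant_sequence_exact₁' X (T.shortExact t) a b hab)

end LongExactSequence

variable {X} {a b j : ℕ}

theorem subsingleton_ext_K_of_le_s10
    (h : ∀ s c, s ≤ t → c + s = a + t → Subsingleton (Ext X (T.Y s) c)) :
    Subsingleton (Ext X (T.K t) a) := by
  induction t generalizing a with
  | zero =>
    rw [T.hK0]
    exact h 0 a le_rfl rfl
  | succ t ih =>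
    have := h (t + 1) a le_rfl rfl
    have : Subsingleton (Ext X (T.K t) (a + 1)) :=
      ih fun s c hs hc => h s c (by omega) (by omega)
    exact subsingleton_of_exact (T.exact_postcomp_π_extClass t X rfl)

theorem subsingleton_ext_K_of_gt (ht : t ≤ n) (ha : n ≤ a + t)
    (h : ∀ s c, t < s → s ≤ n + 1 → c + s = a + t + 1 → Subsingleton (Ext X (T.Y s) c)) :
    Subsingleton (Ext X (T.K t) a) := by
  induction ht using Nat.decreasingInduction generalizing a with
  | self =>
    rw [T.hKm]
    exact h (n + 1) a (by omega) le_rfl rfl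
  | of_succ t ht ih =>
    cases a with
    | zero => omega
    | succ a =>
      have := h (t + 1) (a + 1) (by omega) (by omega) (by omega)
      have : Subsingleton (Ext X (T.K (t + 1)) a) :=
        ih (by omega) fun s c hs hsn hc => h s c (by omega) hsn (by omega)
      exact subsingleton_of_exact (T.exact_postcomp_extClass_ι t X rfl)

theorem postcomp_toK_surjective
    (h : ∀ s c, s < t → c + s = b + t → Subsingleton (Ext X (T.Y s) c)) :
    Function.Surjective ((Ext.mk₀ (T.toK t)).postcomp X (add_zero b)) := by
  cases t with
  | zero => exact (postcomp_mk₀_bijective (eqToHom T.hK0.symm) X b).surjective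
  | succ t =>
    have : Subsingleton (Ext X (T.K t) (b + 1)) :=
      T.subsingleton_ext_K_of_le_s10 fun s c hs hc => h s c (by omega) (by omega)
    exact surjective_of_exact_of_subsingleton (T.exact_postcomp_π_extClass t X rfl)

theorem postcomp_ι_injective (ht : t < n) (hb : b = 0 ∨ n ≤ b + t)
    (h : ∀ s c, t + 1 < s → s ≤ n + 1 → c + s = b + t + 1 → Subsingleton (Ext X (T.Y s) c)) :
    Function.Injective ((Ext.mk₀ (T.ι t)).postcomp X (add_zero b)) := by
  cases b with
  | zero =>
    have : Mono (T.ι t) := (T.shortExact t).mono_f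
    exact Ext.postcomp_mk₀_injective_of_mono X (T.ι t)
  | succ b =>
    have : Subsingleton (Ext X (T.K (t + 1)) b) :=
      T.subsingleton_ext_K_of_gt ht (by omega) fun s c hs hsn hc => h s c hs hsn (by omega)
    exact injective_of_exact_of_subsingleton (T.exact_postcomp_extClass_ι t X rfl)

theorem postcomp_fromK_injective (ht : t ≤ n) (hb : b = 0 ∨ n ≤ b + t)
    (h : ∀ s c, t + 1 < s → s ≤ n + 1 → c + s = b + t + 1 → Subsingleton (Ext X (T.Y s) c)) :
    Function.Injective ((Ext.mk₀ (T.fromK t)).postcomp X (add_zero b)) := by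
  unfold fromK
  split_ifs with htn
  · exact (postcomp_mk₀_bijective _ X b).injective
  · exact T.postcomp_ι_injective (by omega) hb h

theorem exact_postcomp_d (ht : t < n) (hb : b = 0 ∨ n ≤ b + t + 1)
    (hlow : ∀ s c, s < t → c + s = b + t → Subsingleton (Ext X (T.Y s) c))
    (hhigh : ∀ s c, t + 2 < s → s ≤ n + 1 → c + s = b + t + 2 →
      Subsingleton (Ext X (T.Y s) c)) :
    Function.Exact ((Ext.mk₀ (T.d t)).postcomp X (add_zero b))
      ((Ext.mk₀ (T.d (t + 1))).postcomp X (add_zero b)) := by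
  rw [T.d_eq_toK_comp_ι ht, T.d_succ_eq_π_comp_fromK ht, postcomp_mk₀_comp, postcomp_mk₀_comp]
  exact (exact_comp_iff_of_surjective (T.postcomp_toK_surjective hlow)).2 <|
    (T.exact_postcomp_ι_π t X).comp_injective _ (T.postcomp_fromK_injective ht hb hhigh)
      (map_zero _)

theorem chainClass_one : T.chainClass 1 = (T.shortExact 0).extClass := by
  simp only [chainClass, Ext.comp_mk₀_id]

theorem postcomp_chainClass_succ (hb : a + (j + 1) = b) :
    (T.chainClass (j + 1)).postcomp X hb =
      ((T.chainClass j).postcomp X (show a + 1 + j = b by omega)).comp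
        ((T.shortExact j).extClass.postcomp X rfl) :=
  postcomp_comp (T.shortExact j).extClass (T.chainClass j) (by omega) X rfl (by omega)

theorem postcomp_chainClass_injective (hb : a + j = b)
    (h : ∀ t c, 1 ≤ t → t ≤ j → c + t = b → Subsingleton (Ext X (T.Y t) c)) :
    Function.Injective ((T.chainClass j).postcomp X hb) := by
  induction j generalizing a with
  | zero =>
    obtain rfl : a = b := hb
    exact (postcomp_mk₀_bijective (𝟙 (T.K 0)) X a).injective
  | succ j ih =>
    have := h (j + 1) a (by omega) le_rfl hb
    rw [postcomp_chainClass_succ]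
    exact (ih (by omega) fun t c ht htj hc => h t c ht (by omega) hc).comp
      (injective_of_exact_of_subsingleton (T.exact_postcomp_π_extClass j X rfl))

theorem exact_postcomp_π_chainClass (hb : a + (j + 1) = b)
    (h : ∀ t c, 1 ≤ t → t ≤ j → c + t = b → Subsingleton (Ext X (T.Y t) c)) :
    Function.Exact ((Ext.mk₀ (T.π (j + 1))).postcomp X (add_zero a))
      ((T.chainClass (j + 1)).postcomp X hb) := by
  have hinj := T.postcomp_chainClass_injective (show a + 1 + j = b by omega) h
  rw [postcomp_chainClass_succ]
  exact (T.exact_postcomp_π_extClass j X rfl).comp_injective _ hinj (map_zero _)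

theorem exact_postcomp_chainClass_ι (hb : a + (j + 1) = b)
    (h : ∀ t c, 2 ≤ t → t ≤ j + 1 → c + t = b + 1 → Subsingleton (Ext X (T.Y t) c)) :
    Function.Exact ((T.chainClass (j + 1)).postcomp X hb)
      ((Ext.mk₀ (T.ι 0)).postcomp X (add_zero b)) := by
  induction j generalizing a with
  | zero =>
    obtain rfl : a + 1 = b := hb
    rw [chainClass_one]
    exact T.exact_postcomp_extClass_ι 0 X rfl
  | succ j ih =>
    have := h (j + 2) (a + 1) (by omega) le_rfl (by omega)
    rw [postcomp_chainClass_succ]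
    exact (exact_comp_iff_of_surjective
      (surjective_of_exact_of_subsingleton (T.exact_postcomp_extClass_ι (j + 1) X rfl))).2
      (ih (by omega) fun t c ht htj hc => h t c ht (by omega) hc)

theorem mk₀_comp_extClass :
    (Ext.mk₀ (eqToHom T.hKm)).comp T.extClass (zero_add n) =
      (T.chainClass n).comp (Ext.mk₀ (eqToHom T.hK0)) (add_zero n) := by
  simp [extClass]

theorem postcomp_extClass_comp (hb : a + n = b) :
    (T.extClass.postcomp X hb).comp ((Ext.mk₀ (eqToHom T.hKm)).postcomp X (add_zero a)) =
      ((Ext.mk₀ (eqToHom T.hK0)).postcomp X (add_zero b)).comp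
        ((T.chainClass n).postcomp X hb) := by
  rw [← postcomp_comp _ _ (zero_add n), ← postcomp_comp _ _ (add_zero n), mk₀_comp_extClass]

theorem exact_postcomp_d_extClass (hn : 1 ≤ n) (hb : a + n = b)
    (h : ∀ t c, 1 ≤ t → t < n → c + t = b → Subsingleton (Ext X (T.Y t) c)) :
    Function.Exact ((Ext.mk₀ (T.d n)).postcomp X (add_zero a)) (T.extClass.postcomp X hb) := by
  obtain ⟨j, rfl⟩ := Nat.exists_eq_add_of_le' hn
  refine (AddMonoidHom.exact_iff_of_surjective_of_bijective_of_injective _ _ _ _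
    (.id _) ((Ext.mk₀ (eqToHom T.hKm)).postcomp X (add_zero a))
    ((Ext.mk₀ (eqToHom T.hK0)).postcomp X (add_zero b)) ?_ (T.postcomp_extClass_comp hb)
    Function.surjective_id (postcomp_mk₀_bijective _ X a)
    (postcomp_mk₀_bijective _ X b).injective).1
    (T.exact_postcomp_π_chainClass hb fun t c ht htj hc => h t c ht (by omega) hc)
  rw [AddMonoidHom.comp_id, T.dlast_eq, postcomp_mk₀_comp]

theorem exact_postcomp_extClass_d (hn : 1 ≤ n) (hb : a + n = b)
    (h : ∀ t c, 2 ≤ t → t ≤ n → c + t = b + 1 → Subsingleton (Ext X (T.Y t) c)) :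
    Function.Exact (T.extClass.postcomp X hb) ((Ext.mk₀ (T.d 0)).postcomp X (add_zero b)) := by
  obtain ⟨j, rfl⟩ := Nat.exists_eq_add_of_le' hn
  refine (AddMonoidHom.exact_iff_of_surjective_of_bijective_of_injective _ _ _ _
    ((Ext.mk₀ (eqToHom T.hKm)).postcomp X (add_zero a))
    ((Ext.mk₀ (eqToHom T.hK0)).postcomp X (add_zero b)) (.id _) (T.postcomp_extClass_comp hb) ?_
    (postcomp_mk₀_bijective _ X a).surjective (postcomp_mk₀_bijective _ X b)
    Function.injective_id).1 (T.exact_postcomp_chainClass_ι hb h)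
  rw [AddMonoidHom.id_comp, ← postcomp_mk₀_comp, T.d0_eq]

end ExactExtension

theorem not_dvd_of_add_eq_mul {n m j r : ℕ} (h : j + r = m * n) (hr : 0 < r) (hrn : r < n) :
    ¬ n ∣ j :=
  fun hj => Nat.not_dvd_of_pos_of_lt hr hrn ((Nat.dvd_add_right hj).1 (h ▸ Nat.dvd_mul_left n m))

theorem rigid_truncated_covariant_les_general
    {C : Type u} [Category.{v} C] [Abelian C] [HasExt.{w} C]
    (n : ℕ) (hn : 1 ≤ n) (N : ℕ) (X : C) (T : ExactExtension C n)
    (hvan : ∀ t ≤ n + 1, ∀ j ≤ N, ¬ n ∣ j → ∀ e : Ext X (T.Y t) j, e = 0) :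
    (Function.Injective fun e : Ext X (T.Y 0) 0 => e.comp (Ext.mk₀ (T.d 0)) (add_zero 0)) ∧
    (∀ m, ∀ t < n, m * n + t ≤ N → Function.Exact
        (fun e : Ext X (T.Y t) (m * n) => e.comp (Ext.mk₀ (T.d t)) (add_zero _))
        (fun e : Ext X (T.Y (t + 1)) (m * n) => e.comp (Ext.mk₀ (T.d (t + 1))) (add_zero _))) ∧
    (∀ m, (m + 1) * n ≤ N + 1 → Function.Exact
        (fun e : Ext X (T.Y n) (m * n) => e.comp (Ext.mk₀ (T.d n)) (add_zero _))
        (fun e : Ext X (T.Y (n + 1)) (m * n) =>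
          e.comp T.extClass (show m * n + n = (m + 1) * n by ring))) ∧
    (∀ m, (m + 1) * n ≤ N + 1 → Function.Exact
        (fun e : Ext X (T.Y (n + 1)) (m * n) =>
          e.comp T.extClass (show m * n + n = (m + 1) * n by ring))
        (fun e : Ext X (T.Y 0) ((m + 1) * n) => e.comp (Ext.mk₀ (T.d 0)) (add_zero _))) := by
  have hsub {m j t : ℕ} (r : ℕ) (hj : j + r = m * n) (hr : 0 < r) (hrn : r < n) (hjN : j ≤ N)
      (ht : t ≤ n + 1) : Subsingleton (Ext X (T.Y t) j) :=
    subsingleton_of_forall_eq 0 (hvan t ht j hjN (not_dvd_of_add_eq_mul hj hr hrn))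
  have hmono := T.mono_d_zero
  refine ⟨Ext.postcomp_mk₀_injective_of_mono X (T.d 0), fun m t ht hN => ?_, fun m hm => ?_,
    fun m hm => ?_⟩
  · have hsucc : (m + 1) * n = m * n + n := Nat.succ_mul m n
    have hrow : m * n = 0 ∨ n ≤ m * n + t + 1 := by
      rcases m.eq_zero_or_pos with rfl | hm
      · exact .inl (zero_mul n)
      · exact .inr (by linarith [Nat.le_mul_of_pos_left n hm])
    exact T.exact_postcomp_d ht hrow
      (fun s c hs hc => hsub (m := m + 1) (n + s - t) (by omega) (by omega) (by omega) (by omega)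
        (by omega))
      (fun s c hs hsn hc => hsub (m := m) (s - t - 2) (by omega) (by omega) (by omega) (by omega)
        hsn)
  · exact T.exact_postcomp_d_extClass hn (by ring) fun t c ht htn hc =>
      hsub t hc ht htn (by omega) (by omega)
  · exact T.exact_postcomp_extClass_d hn (by ring) fun t c ht htn hc =>
      hsub (t - 1) (by omega : c + (t - 1) = (m + 1) * n) (by omega) (by omega) (by omega)
        (by omega)

/-- Let `𝓔` be an abelian category, `n ≥ 1`, and `M` an `n`-rigid full
subcategory (closed under isomorphisms) of `𝓔`.  Fix `k ≥ 1` and `i ∈ {1,…,n-1}` and suppose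
`Ext^j(X,Y) = 0` for all `X, Y ∈ M` and every `j ∈ {1,…,kn+i-1}` not divisible by `n`.  Then
for every `X ∈ M` and every `n`-exact sequence `T` with terms in `M` the truncated long sequence
`0 → Hom(X,Y⁰) → ⋯ → Ext^{kn}(X,Y^{i-1}) → Ext^{kn}(X,Y^i)` (with maps induced by the
differentials and connecting maps given by Yoneda composition with `[T]`) is exact at every
interior spot. -/
theorem rigid_truncated_covariant_les
    {C : Type u} [Category.{v} C] [Abelian C] [HasExt.{w} C]
    (n : ℕ) (hn : 1 ≤ n) (M : Set C)
    (hiso : ∀ ⦃X Y : C⦄, (X ≅ Y) → X ∈ M → Y ∈ M)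
    (hrigid : ∀ X ∈ M, ∀ Y ∈ M, ∀ j : ℕ, 1 ≤ j → j < n → ∀ e : Ext X Y j, e = 0)
    (k : ℕ) (hk : 1 ≤ k) (i : ℕ) (hi1 : 1 ≤ i) (hi2 : i ≤ n - 1)
    (hvan : ∀ X ∈ M, ∀ Y ∈ M, ∀ j : ℕ, 1 ≤ j → j ≤ k * n + i - 1 → ¬ (n ∣ j) →
      ∀ e : Ext X Y j, e = 0)
    (X : C) (hX : X ∈ M)
    (T : ExactExtension C n) (hT : ∀ t ≤ n + 1, T.Y t ∈ M) :
    -- exactness (= injectivity) at `Hom(X,Y⁰)`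
    (Function.Injective fun e : Ext X (T.Y 0) 0 => e.comp (Ext.mk₀ (T.d 0)) (add_zero 0)) ∧
    -- exactness at `Ext^{mn}(X,Y^{t+1})` for `m < k`, `t + 1 ≤ n`
    (∀ m < k, ∀ t < n, Function.Exact
        (fun e : Ext X (T.Y t) (m * n) => e.comp (Ext.mk₀ (T.d t)) (add_zero _))
        (fun e : Ext X (T.Y (t + 1)) (m * n) => e.comp (Ext.mk₀ (T.d (t + 1))) (add_zero _))) ∧
    -- exactness at `Ext^{kn}(X,Y^{t+1})` for `t + 1 ≤ i - 1`
    (∀ t : ℕ, t + 2 ≤ i → Function.Exact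
        (fun e : Ext X (T.Y t) (k * n) => e.comp (Ext.mk₀ (T.d t)) (add_zero _))
        (fun e : Ext X (T.Y (t + 1)) (k * n) => e.comp (Ext.mk₀ (T.d (t + 1))) (add_zero _))) ∧
    -- exactness at `Ext^{mn}(X,Y^{n+1})` for `m < k`
    (∀ m < k, Function.Exact
        (fun e : Ext X (T.Y n) (m * n) => e.comp (Ext.mk₀ (T.d n)) (add_zero _))
        (fun e : Ext X (T.Y (n + 1)) (m * n) =>
          e.comp T.extClass (show m * n + n = (m + 1) * n by ring))) ∧
    -- exactness at `Ext^{(m+1)n}(X,Y⁰)` for `m + 1 ≤ k`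
    (∀ m < k, Function.Exact
        (fun e : Ext X (T.Y (n + 1)) (m * n) =>
          e.comp T.extClass (show m * n + n = (m + 1) * n by ring))
        (fun e : Ext X (T.Y 0) ((m + 1) * n) => e.comp (Ext.mk₀ (T.d 0)) (add_zero _))) := by
  have hle (m : ℕ) (hm : m < k) : (m + 1) * n ≤ k * n := Nat.mul_le_mul_right n hm
  have hsucc (m : ℕ) : (m + 1) * n = m * n + n := Nat.succ_mul m n
  have hvan' : ∀ t ≤ n + 1, ∀ j ≤ k * n + i - 1, ¬ n ∣ j → ∀ e : Ext X (T.Y t) j, e = 0 :=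
    fun t ht j hj hnj => hvan X hX _ (hT t ht) j
      (Nat.pos_of_ne_zero fun h0 => hnj (h0 ▸ dvd_zero n)) hj hnj
  obtain ⟨hinj, hrow, hlast, hfirst⟩ := rigid_truncated_covariant_les_general n hn _ X T hvan'
  exact ⟨hinj, fun m hm t ht => hrow m t ht (by have := hle m hm; have := hsucc m; omega),
    fun t ht => hrow k t (by omega) (by omega),
    fun m hm => hlast m (by have := hle m hm; omega),
    fun m hm => hfirst m (by have := hle m hm; omega)⟩

end NZPaper
end
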